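/- arXiv:1005.4277 — 2 statements merged into one kernel-verified Lean document; each statement's English description precedes it below -/
import Mathlib

section
/- Twist relation: let a, b, c ∈ ℂ \ (1/2)ℤ with a+b−c ∈ {0,1,…,n−1}, and set t_x = x(x+1−n) for x ∈ ℂ. Then R_{b,a} ∘ Y_c^{b,a} = ξ^{t_c − t_a − t_b} · Y_c^{a,b} as linear maps V^c → V^a ⊗ V^b. -/
open Complex Finset Filter
open scoped Matrix Kronecker Real

noncomputable section

/-- `ξ^a = exp(π √-1 a / n)` for the `2n`-th root of unity `ξ = exp(π √-1/n)`. -/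
def xic (n : ℕ) (a : ℂ) : ℂ := Complex.exp (Real.pi * Complex.I * a / n)

/-- `{a} = ξ^a - ξ^{-a}`. -/
def qn (n : ℕ) (a : ℂ) : ℂ := xic n a - xic n (-a)

/-- `{k}! = {1}{2}⋯{k}`. -/
def qfac (n : ℕ) (k : ℕ) : ℂ := ∏ j ∈ Finset.range k, qn n ((j : ℂ) + 1)

-- The quantum binomial `[a¦b]`, defined (and nonzero) only when `a - b ∈ {0,1,…,n-1}`.
open Classical in
def qbin (n : ℕ) (a b : ℂ) : ℂ :=
  if h : ∃ k : ℕ, k < n ∧ a - b = (k : ℂ) then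
    ∏ j ∈ Finset.range h.choose, qn n (a - (j : ℂ)) / qn n (a - b - (j : ℂ))
  else 0

/-- `[a] = {a}/{1}`. -/
def qint (n : ℕ) (a : ℂ) : ℂ := qn n a / qn n 1

/-- `a` is not a half-integer. -/
def NotHalfInt (a : ℂ) : Prop := ∀ m : ℤ, a ≠ (m : ℂ) / 2

/-- `x ∈ {0, 1, …, n-1}` (as a complex number). -/
def InZn (n : ℕ) (x : ℂ) : Prop := ∃ k : ℕ, k < n ∧ x = (k : ℂ)

/-- The matrix of `E` on `V^a = ℂ^n`: `E e_j = [j] e_{j-1}` (independent of `a`). -/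
def Emat (n : ℕ) : Matrix (Fin n) (Fin n) ℂ :=
  Matrix.of fun i j => if (j : ℕ) = (i : ℕ) + 1 then qint n ((j : ℕ) : ℂ) else 0

/-- The matrix of `F` on `V^a`: `F e_j = [2a-j] e_{j+1}` (with `e_n = 0`). -/
def Fmat (n : ℕ) (a : ℂ) : Matrix (Fin n) (Fin n) ℂ :=
  Matrix.of fun i j => if (i : ℕ) = (j : ℕ) + 1 then qint n (2 * a - ((j : ℕ) : ℂ)) else 0

/-- The matrix of `K` on `V^a`: `K e_j = ξ^{a-j} e_j`. -/
def Kmat (n : ℕ) (a : ℂ) : Matrix (Fin n) (Fin n) ℂ :=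
  Matrix.of fun i j => if i = j then xic n (a - ((i : ℕ) : ℂ)) else 0

/-- The matrix of `K⁻¹` on `V^a`. -/
def Kinvmat (n : ℕ) (a : ℂ) : Matrix (Fin n) (Fin n) ℂ :=
  Matrix.of fun i j => if i = j then xic n (-(a - ((i : ℕ) : ℂ))) else 0

/-- The `R`-matrix `R_{a,b} : V^a ⊗ V^b → V^b ⊗ V^a`:
`R(e_u ⊗ e_v) = Σ_m {m}! ξ^{2(a-u)(b-v) - m(a-b-u+v) - m(m+1)/2} [u¦u-m] [2b-v¦2b-v-m]
e_{v+m} ⊗ e_{u-m}`; the entry at row `(h,k)`, column `(u,v)` is the coefficient of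
`e_h ⊗ e_k`, nonzero only when `h + k = u + v` and `h ≥ v` (with `m = h - v`). -/
def Rmat (n : ℕ) (a b : ℂ) : Matrix (Fin n × Fin n) (Fin n × Fin n) ℂ :=
  Matrix.of fun p q =>
    if ((p.1 : ℕ) + (p.2 : ℕ) = (q.1 : ℕ) + (q.2 : ℕ)) ∧ ((q.2 : ℕ) ≤ (p.1 : ℕ)) then
      (fun m : ℕ =>
        qfac n m *
        xic n (2 * (a - ((q.1 : ℕ) : ℂ)) * (b - ((q.2 : ℕ) : ℂ))
            - (m : ℂ) * (a - b - ((q.1 : ℕ) : ℂ) + ((q.2 : ℕ) : ℂ))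
            - (m : ℂ) * ((m : ℂ) + 1) / 2) *
        qbin n ((q.1 : ℕ) : ℂ) (((q.1 : ℕ) : ℂ) - (m : ℂ)) *
        qbin n (2 * b - ((q.2 : ℕ) : ℂ)) (2 * b - ((q.2 : ℕ) : ℂ) - (m : ℂ)))
      ((p.1 : ℕ) - (q.2 : ℕ))
    else 0

/-- The Clebsch-Gordan quantum coefficient `C^{a,b,c}_{u,v,t}`. -/
def CG (n : ℕ) (a b c : ℂ) (u v t : ℕ) : ℂ :=
  Complex.exp (Real.pi * Complex.I * (c - a - b) / 2) *
  (-1 : ℂ) ^ ((v : ℤ) - (t : ℤ)) *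
  xic n (((v : ℂ) * (2 * b - (v : ℂ) + 1) - (u : ℂ) * (2 * a - (u : ℂ) + 1)) / 2) *
  (qbin n (2 * c) (2 * c - (t : ℂ)))⁻¹ *
  qbin n (2 * c) (a + b + c - ((n : ℂ) - 1)) *
  ∑ z ∈ Finset.range (t + 1),
    (-1 : ℂ) ^ z * xic n ((2 * (z : ℂ) - (t : ℂ)) * (2 * c - (t : ℂ) + 1) / 2) *
    qbin n (a + b - c) ((u : ℂ) - (z : ℂ)) *
    qbin n (2 * a - (u : ℂ) + (z : ℂ)) (2 * a - (u : ℂ)) *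
    qbin n (2 * b - (v : ℂ) + ((t : ℂ) - (z : ℂ))) (2 * b - (v : ℂ))

-- The inclusion `Y_c^{a,b} : V^c → V^a ⊗ V^b`.
open Classical in
def Yinc (n : ℕ) (a b c : ℂ) : Matrix (Fin n × Fin n) (Fin n) ℂ :=
  Matrix.of fun p t =>
    if ((p.1 : ℕ) : ℂ) + ((p.2 : ℕ) : ℂ) - ((t : ℕ) : ℂ) = a + b - c then
      CG n a b c (p.1 : ℕ) (p.2 : ℕ) (t : ℕ)
    else 0

-- The projection `Y_{a,b}^c : V^a ⊗ V^b → V^c`.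
open Classical in
def Yproj (n : ℕ) (a b c : ℂ) : Matrix (Fin n) (Fin n × Fin n) ℂ :=
  Matrix.of fun t p =>
    if ((p.1 : ℕ) : ℂ) + ((p.2 : ℕ) : ℂ) - ((t : ℕ) : ℂ) = a + b - c then
      CG n ((n : ℂ) - 1 - b) ((n : ℂ) - 1 - a) ((n : ℂ) - 1 - c)
        (n - 1 - (p.2 : ℕ)) (n - 1 - (p.1 : ℕ)) (n - 1 - (t : ℕ))
    else 0

-- Extracts the natural number `k` with `x = k` (0 if there is none).
open Classical in
def natIdx (x : ℂ) : ℕ := if h : ∃ k : ℕ, x = (k : ℂ) then h.choose else 0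

/-- The `SL(2,ℂ)` quantum 6j-symbol `{a b e; d c f}_ξ`. -/
def sixj (n : ℕ) (a b e d c f : ℂ) : ℂ :=
  (-1 : ℂ) ^ (n - 1 + natIdx (a + f - c)) *
  (qbin n (2 * f + (n : ℂ)) (2 * f + 1))⁻¹ *
  (qfac n (natIdx (d + e - c)) * qfac n (natIdx (a + b - e)) /
    (qfac n (natIdx (b + d - f)) * qfac n (natIdx (a + f - c)))) *
  qbin n (2 * e) (a + b + e + 1 - (n : ℂ)) *
  (qbin n (2 * e) (e + c - d))⁻¹ *
  ∑ z ∈ Finset.Icc (natIdx (d + e - c) - natIdx (b + d - f))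
      (min (natIdx (d + e - c)) (natIdx (a + f - c))),
    (-1 : ℂ) ^ z * qbin n (a + f + c + 1) (2 * c + (z : ℂ) + 1) *
    qbin n ((a + c - f) + (z : ℂ)) (a + c - f) *
    qbin n ((b + f - d) + (d + e - c) - (z : ℂ)) (b + f - d) *
    qbin n ((d + c - e) + (z : ℂ)) (d + f - b)

/-- The tetrahedral symbol `{a b e; d c f}_tet = {a b e; d c f}_ξ · [2f+n¦2f+1]`. -/
def sixjtet (n : ℕ) (a b e d c f : ℂ) : ℂ :=
  sixj n a b e d c f * qbin n (2 * f + (n : ℂ)) (2 * f + 1)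

/-- The Lobachevsky function `Λ(x) = -∫_0^x log|2 sin t| dt`. -/
def lob (x : ℝ) : ℝ := -∫ t in (0 : ℝ)..x, Real.log |2 * Real.sin t|

/-- A triple of integers is admissible. -/
def Admissible (n : ℕ) (i j k : ℤ) : Prop :=
  0 < i ∧ 0 < j ∧ 0 < k ∧ i < (n : ℤ) - 1 ∧ j < (n : ℤ) - 1 ∧ k < (n : ℤ) - 1 ∧
  (n : ℤ) - 1 < i + j + k ∧ i + j + k < 2 * ((n : ℤ) - 1) ∧
  0 < i + j - k ∧ 0 < j + k - i ∧ 0 < k + i - j ∧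
  i + j - k < (n : ℤ) - 1 ∧ j + k - i < (n : ℤ) - 1 ∧ k + i - j < (n : ℤ) - 1

/-!
Let `ΔX = X ⊗ K + K⁻¹ ⊗ X` for `X = E, F`. The relation follows from two intertwining properties,
`R ΔX = ΔX R` and `Y F = ΔF Y`, together with `ΔE (Y e_0) = 0`.

* Since `F e_t = [2c-t] e_{t+1}` with `[2c-t] ≠ 0`, the vectors `Y e_t` are obtained from `Y e_0` by
  applying `ΔF`, which commutes with `R`; so it suffices to compare both sides on `e_0`.
* Let `N = a + b - c < n`. The vector `Y e_0` and its image under `R` are killed by `ΔE` and lie in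
  the span of the `e_u ⊗ e_v` with `u + v = N`. As `[1], …, [N]` are nonzero, such a vector is
  determined by its coordinate at `e_0 ⊗ e_N`.
* The coordinate of `R (e_u ⊗ e_v)` at `e_0 ⊗ e_N` vanishes unless `(u, v) = (N, 0)`, where it is a
  power of `ξ`; comparing exponents gives `t_c - t_a - t_b`.
-/

section QuantumNumbers

variable {n : ℕ}

theorem xic_add (x y : ℂ) : xic n (x + y) = xic n x * xic n y := by
  rw [xic, xic, xic, ← Complex.exp_add]
  ring_nf

theorem xic_ne_zero (x : ℂ) : xic n x ≠ 0 := Complex.exp_ne_zero _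

theorem xic_neg_natCast_mul_self (hn : n ≠ 0) (k : ℕ) : xic n (-(k * n)) = (-1) ^ k := by
  have hn' : (n : ℂ) ≠ 0 := Nat.cast_ne_zero.mpr hn
  rw [xic, ← Complex.exp_neg_pi_mul_I, ← Complex.exp_nat_mul]
  field_simp

theorem qn_zero : qn n 0 = 0 := by simp [qn]

theorem qn_eq_sin (x : ℂ) : qn n x = 2 * I * Complex.sin (x / n * π) := by
  rw [Complex.sin, qn, xic, xic]
  ring_nf
  simp [sub_eq_add_neg]

theorem qn_eq_zero_iff (hn : n ≠ 0) {x : ℂ} : qn n x = 0 ↔ ∃ l : ℤ, x = l * n := by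
  have hn' : (n : ℂ) ≠ 0 := Nat.cast_ne_zero.mpr hn
  have hπ : (π : ℂ) ≠ 0 := mod_cast Real.pi_ne_zero
  simp [qn_eq_sin, Complex.sin_eq_zero_iff, hπ, div_eq_iff hn']

theorem qn_self (hn : n ≠ 0) : qn n n = 0 :=
  (qn_eq_zero_iff hn).mpr ⟨1, by simp⟩

theorem qn_natCast_ne_zero {j : ℕ} (hj₀ : j ≠ 0) (hj : j < n) : qn n j ≠ 0 := by
  rw [Ne, qn_eq_zero_iff (by lia)]
  rintro ⟨l, hl⟩
  have hdvd : (n : ℤ) ∣ j := ⟨l, by rw [mul_comm]; exact_mod_cast hl⟩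
  exact hj₀ (Nat.eq_zero_of_dvd_of_lt (Int.natCast_dvd_natCast.mp hdvd) hj)

theorem qn_natCast_add_one_ne_zero {j : ℕ} (hj : j + 1 < n) : qn n (j + 1) ≠ 0 := by
  exact_mod_cast qn_natCast_ne_zero j.succ_ne_zero hj

theorem qint_zero : qint n 0 = 0 := by simp [qint, qn_zero]

theorem qint_self (hn : n ≠ 0) : qint n n = 0 := by simp [qint, qn_self hn]

theorem qint_ne_zero (hn : 1 < n) {x : ℂ} (hx : qn n x ≠ 0) : qint n x ≠ 0 :=
  div_ne_zero hx (mod_cast qn_natCast_ne_zero one_ne_zero hn)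

theorem NotHalfInt.qn_two_mul_sub_ne_zero {c : ℂ} (hc : NotHalfInt c) (hn : n ≠ 0) (j : ℕ) :
    qn n (2 * c - j) ≠ 0 := by
  rw [Ne, qn_eq_zero_iff hn]
  rintro ⟨l, hl⟩
  refine hc (l * n + j) ?_
  push_cast
  linear_combination hl / 2

/-- The falling product `{a, a-k} = {a}{a-1}⋯{a-k+1}`, the numerator of `[a¦a-k]`. -/
def qfall (n : ℕ) (a : ℂ) (k : ℕ) : ℂ := ∏ j ∈ range k, qn n (a - j)

theorem qfall_zero (x : ℂ) : qfall n x 0 = 1 := by simp [qfall]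

theorem qfall_succ (x : ℂ) (k : ℕ) : qfall n x (k + 1) = qfall n x k * qn n (x - k) :=
  prod_range_succ ..

theorem qfall_succ' (x : ℂ) (k : ℕ) : qfall n x (k + 1) = qn n x * qfall n (x - 1) k := by
  simp only [qfall, prod_range_succ', Nat.cast_add, Nat.cast_one, Nat.cast_zero, sub_zero,
    sub_add_eq_sub_sub_swap, mul_comm]

theorem qfall_eq_zero {x : ℂ} {k j : ℕ} (hj : j < k) (h : qn n (x - j) = 0) : qfall n x k = 0 :=
  prod_eq_zero (mem_range.mpr hj) h

theorem qfac_zero : qfac n 0 = 1 := by simp [qfac]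

theorem qfac_succ (k : ℕ) : qfac n (k + 1) = qfac n k * qn n (k + 1) :=
  prod_range_succ ..

theorem qfac_ne_zero {k : ℕ} (hk : k < n) : qfac n k ≠ 0 :=
  prod_ne_zero_iff.mpr fun _ hj ↦
    qn_natCast_add_one_ne_zero ((Nat.succ_le_of_lt (mem_range.mp hj)).trans_lt hk)

theorem qfall_natCast_self (k : ℕ) : qfall n k k = qfac n k := by
  induction k with
  | zero => rw [qfall_zero, qfac_zero]
  | succ k ih => rw [qfall_succ', qfac_succ, Nat.cast_succ, add_sub_cancel_right, ih, mul_comm]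

theorem qbin_eq_div {x y : ℂ} {k : ℕ} (hk : k < n) (h : x - y = k) :
    qbin n x y = qfall n x k / qfac n k := by
  have hex : ∃ k : ℕ, k < n ∧ x - y = k := ⟨k, hk, h⟩
  have hchoose : hex.choose = k := by exact_mod_cast hex.choose_spec.2.symm.trans h
  rw [qbin, dif_pos hex, hchoose, prod_div_distrib, h, ← qfall_natCast_self, qfall, qfall]

theorem qbin_sub_natCast (x : ℂ) {k : ℕ} (hk : k < n) :
    qbin n x (x - k) = qfall n x k / qfac n k :=
  qbin_eq_div hk (sub_sub_cancel x _)

theorem qbin_self (hn : n ≠ 0) (x : ℂ) : qbin n x x = 1 := by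
  rw [qbin_eq_div (k := 0) (by lia) (by simp), qfall_zero, qfac_zero, div_one]

theorem qbin_natCast_zero {k : ℕ} (hk : k < n) : qbin n k 0 = 1 := by
  rw [qbin_eq_div hk (sub_zero _), qfall_natCast_self, div_self (qfac_ne_zero hk)]

theorem qbin_natCast_intCast_eq_zero {N : ℕ} {i : ℤ} (hi : i < 0 ∨ N < i) :
    qbin n N i = 0 := by
  by_cases hex : ∃ k : ℕ, k < n ∧ (N : ℂ) - i = k
  · obtain ⟨k, hk, h⟩ := hex
    have h' : (N : ℤ) - i = k := by exact_mod_cast h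
    rw [qbin_eq_div hk h, qfall_eq_zero (j := N) (by lia) (by simp [qn_zero]), zero_div]
  · rw [qbin, dif_neg hex]

theorem qn_mul_qbin_add_succ (x : ℂ) {k : ℕ} (hk : k + 1 < n) :
    qn n (k + 1) * qbin n (x + (k + 1)) x = qn n (x + 1) * qbin n (x + 1 + k) (x + 1) := by
  have hq := qn_natCast_add_one_ne_zero hk
  rw [qbin_eq_div (k := k + 1) hk (by push_cast; ring), qbin_eq_div (k := k) (by lia) (by ring),
    qfac_succ, qfall_succ, add_assoc x, add_comm (1 : ℂ), ← add_assoc, add_sub_right_comm,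
    add_sub_cancel_right]
  field_simp

theorem qn_mul_qbin_sub_succ (x : ℂ) {k : ℕ} (hk : k + 1 < n) :
    qn n (k + 1) * qbin n x (x - (k + 1)) = qn n (x - k) * qbin n x (x - k) := by
  have hq := qn_natCast_add_one_ne_zero hk
  rw [qbin_eq_div (k := k + 1) hk (by push_cast; ring), qbin_eq_div (k := k) (by lia) (by ring),
    qfac_succ, qfall_succ]
  field_simp

theorem qn_ne_zero_of_qbin_ne_zero {x : ℂ} {k j : ℕ} (hk : k < n) (hj : j < k)
    (h : qbin n x (x - k) ≠ 0) : qn n (x - j) ≠ 0 := by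
  contrapose h
  rw [qbin_sub_natCast x hk, qfall_eq_zero hj h, zero_div]

theorem NotHalfInt.qbin_two_mul_ne_zero {c : ℂ} (hc : NotHalfInt c) {k : ℕ} (hk : k < n) :
    qbin n (2 * c) (2 * c - k) ≠ 0 := by
  rw [qbin_sub_natCast _ hk]
  exact div_ne_zero (prod_ne_zero_iff.mpr fun j _ ↦ hc.qn_two_mul_sub_ne_zero (by lia) j)
    (qfac_ne_zero hk)

end QuantumNumbers

section Coproduct

variable {n : ℕ}

theorem sum_fin_ite_eq {M : Type*} [AddCommMonoid M] {P : Fin n → Prop} [DecidablePred P]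
    {F : Fin n → M} {y : M} {j : ℤ} (hP : ∀ i, P i ↔ ((i : ℕ) : ℤ) = j) (hF : ∀ i, P i → F i = y)
    (hy : j < 0 ∨ n ≤ j → y = 0) : ∑ i, (if P i then F i else 0) = y := by
  by_cases hj : j < 0 ∨ n ≤ j
  · rw [hy hj]
    exact sum_eq_zero fun i _ ↦ if_neg fun h ↦ by have := (hP i).mp h; omega
  · obtain ⟨k, rfl⟩ : ∃ k : ℕ, j = k := ⟨j.toNat, by omega⟩
    have hk : P ⟨k, by omega⟩ := (hP _).mpr rfl
    rw [sum_eq_single ⟨k, by omega⟩ (fun i _ hi ↦ if_neg fun h ↦ hi (Fin.ext (by grind))) (by simp),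
      if_pos hk, hF _ hk]

theorem Emat_mulVec_apply (f : ℤ → ℂ) (i : Fin n) :
    (Emat n *ᵥ fun j ↦ f (j : ℕ)) i = qint n ((i : ℕ) + 1) * f ((i : ℕ) + 1) := by
  simp only [Matrix.mulVec, dotProduct, Emat, Matrix.of_apply, ite_mul, zero_mul]
  refine sum_fin_ite_eq (j := (i : ℕ) + 1) (by omega) (fun j hj ↦ by simp [hj]) fun h ↦ ?_
  have hi : ((i : ℕ) : ℂ) + 1 = n := by exact_mod_cast (by omega : (i : ℕ) + 1 = n)
  rw [hi, qint_self i.pos.ne', zero_mul]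

theorem vecMul_Emat_apply (f : ℤ → ℂ) (j : Fin n) :
    ((fun i : Fin n ↦ f (i : ℕ)) ᵥ* Emat n) j = f ((j : ℕ) - 1) * qint n (j : ℕ) := by
  simp only [Matrix.vecMul, dotProduct, Emat, Matrix.of_apply, mul_ite, mul_zero]
  refine sum_fin_ite_eq (j := (j : ℕ) - 1) (by omega) (fun i hi ↦ by simp [hi]) fun h ↦ ?_
  have hj : (j : ℕ) = 0 := by omega
  simp [hj, qint_zero]

theorem Fmat_mulVec_apply (a : ℂ) {f : ℤ → ℂ} (hf : f (-1) = 0) (i : Fin n) :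
    (Fmat n a *ᵥ fun j ↦ f (j : ℕ)) i = qint n (2 * a - (i : ℕ) + 1) * f ((i : ℕ) - 1) := by
  simp only [Matrix.mulVec, dotProduct, Fmat, Matrix.of_apply, ite_mul, zero_mul]
  refine sum_fin_ite_eq (j := (i : ℕ) - 1) (by omega) (fun j hj ↦ ?_) fun h ↦ ?_
  · rw [hj]
    push_cast
    ring_nf
  · have hi : ((i : ℕ) : ℤ) - 1 = -1 := by omega
    rw [hi, hf, mul_zero]

theorem vecMul_Fmat_apply (a : ℂ) {f : ℤ → ℂ} (hf : f n = 0) (j : Fin n) :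
    ((fun i : Fin n ↦ f (i : ℕ)) ᵥ* Fmat n a) j = f ((j : ℕ) + 1) * qint n (2 * a - (j : ℕ)) := by
  simp only [Matrix.vecMul, dotProduct, Fmat, Matrix.of_apply, mul_ite, mul_zero]
  refine sum_fin_ite_eq (j := (j : ℕ) + 1) (by omega) (fun i hi ↦ by simp [hi]) fun h ↦ ?_
  have hj : ((j : ℕ) : ℤ) + 1 = n := by omega
  rw [hj, hf, zero_mul]

theorem Kmat_eq_diagonal (a : ℂ) : Kmat n a = .diagonal fun i ↦ xic n (a - (i : ℕ)) := by
  ext i j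
  simp [Kmat, Matrix.diagonal_apply]

theorem Kinvmat_eq_diagonal (a : ℂ) : Kinvmat n a = .diagonal fun i ↦ xic n ((i : ℕ) - a) := by
  ext i j
  simp [Kinvmat, Matrix.diagonal_apply]

/-- The action `A ⊗ K + K⁻¹ ⊗ B` on `V^a ⊗ V^b` of the coproduct `ΔX = X ⊗ K + K⁻¹ ⊗ X` of
`X = E` or `X = F`, where `A` and `B` are the actions of `X` on `V^a` and `V^b`. -/
def coprod (n : ℕ) (a b : ℂ) (A B : Matrix (Fin n) (Fin n) ℂ) :
    Matrix (Fin n × Fin n) (Fin n × Fin n) ℂ :=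
  A ⊗ₖ Kmat n b + Kinvmat n a ⊗ₖ B

theorem coprod_mulVec_apply (a b : ℂ) (A B : Matrix (Fin n) (Fin n) ℂ) (x : Fin n × Fin n → ℂ)
    (h k : Fin n) :
    (coprod n a b A B *ᵥ x) (h, k) = xic n (b - (k : ℕ)) * (A *ᵥ fun u ↦ x (u, k)) h +
      xic n ((h : ℕ) - a) * (B *ᵥ fun v ↦ x (h, v)) k := by
  simp [coprod, Kmat_eq_diagonal, Kinvmat_eq_diagonal, Matrix.mulVec, dotProduct,
    Fintype.sum_prod_type, Matrix.diagonal_apply, add_mul, sum_add_distrib, mul_sum, mul_assoc,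
    mul_left_comm]

theorem vecMul_coprod_apply (a b : ℂ) (A B : Matrix (Fin n) (Fin n) ℂ) (x : Fin n × Fin n → ℂ)
    (u v : Fin n) :
    (x ᵥ* coprod n a b A B) (u, v) = ((fun h ↦ x (h, v)) ᵥ* A) u * xic n (b - (v : ℕ)) +
      ((fun k ↦ x (u, k)) ᵥ* B) v * xic n ((u : ℕ) - a) := by
  simp [coprod, Kmat_eq_diagonal, Kinvmat_eq_diagonal, Matrix.vecMul, dotProduct,
    Fintype.sum_prod_type, Matrix.diagonal_apply, mul_add, sum_add_distrib, sum_mul, mul_assoc,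
    mul_comm (xic n _)]

end Coproduct

section RMatrix

variable {n : ℕ}

/-- The coefficient of `e_{v+m} ⊗ e_{u-m}` in `R_{a,b}(e_u ⊗ e_v)`, for complex `u` and `v`; here
`{m}! [u¦u-m] [2b-v¦2b-v-m]` is written as `{u, u-m} {2b-v, 2b-v-m} / {m}!`. -/
def rCoeff (n : ℕ) (a b u v : ℂ) (m : ℕ) : ℂ :=
  xic n (2 * (a - u) * (b - v) - m * (a - b - u + v) - m * (m + 1) / 2) *
    qfall n u m * qfall n (2 * b - v) m / qfac n m

-- This symmetry exchanges the actions of `E` and `F`, so that `R ΔE = ΔE R` need not be computed.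
theorem rCoeff_symm (a b u v : ℂ) (m : ℕ) :
    rCoeff n b a (2 * b - v) (2 * a - u) m = rCoeff n a b u v m := by
  rw [rCoeff, rCoeff, sub_sub_cancel, mul_right_comm]
  ring_nf

theorem rCoeff_zero (a b u v : ℂ) : rCoeff n a b u v 0 = xic n (2 * (a - u) * (b - v)) := by
  simp [rCoeff, qfall_zero, qfac_zero]

theorem rCoeff_F_zero (a b u v : ℂ) :
    rCoeff n a b (u + 1) v 0 * (qn n (2 * a - u) * xic n (b - v)) =
      qn n (2 * a - u) * xic n (v - b) * rCoeff n a b u v 0 := by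
  have hx : xic n (2 * (a - (u + 1)) * (b - v)) * xic n (b - v) =
      xic n (v - b) * xic n (2 * (a - u) * (b - v)) := by
    rw [← xic_add, ← xic_add]
    ring_nf
  rw [rCoeff_zero, rCoeff_zero]
  linear_combination qn n (2 * a - u) * hx

-- What remains of the coefficient identity for `R ΔF = ΔF R` once common factors are cancelled.
theorem qn_exchange_identity (a b u v m : ℂ) :
    qn n (u + 1) * qn n (2 * a - u) * (xic n (u + v - a - b) * xic n (b - v)) +
        qn n (m + 1) * (xic n (2 * (u - a) - m) * xic n (u - a)) =
      qn n (m + 1) * xic n (a - u + m) +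
        qn n (2 * a - u + m + 1) * qn n (u - m) *
          (xic n (v + m + 1 - b) * xic n (b - a + u - v - (m + 1))) := by
  simp only [qn, sub_mul, mul_sub, ← xic_add]
  ring_nf

theorem rCoeff_F_succ (a b u v : ℂ) {m : ℕ} (hm : m + 1 < n) :
    rCoeff n a b (u + 1) v (m + 1) * (qn n (2 * a - u) * xic n (b - v)) +
        rCoeff n a b u (v + 1) m * (qn n (2 * b - v) * xic n (u - a)) =
      qn n (2 * b - v - m) * xic n (a - u + m) * rCoeff n a b u v m +
        qn n (2 * a - u + m + 1) * xic n (v + m + 1 - b) * rCoeff n a b u v (m + 1) := by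
  have hv : qfall n (2 * b - (v + 1)) m * qn n (2 * b - v) =
      qfall n (2 * b - v) m * qn n (2 * b - v - m) := by
    rw [← qfall_succ, qfall_succ', mul_comm]
    ring_nf
  set Z := xic n (2 * (a - u) * (b - v) - m * (a - b - u + v) - m * (m + 1) / 2) with hZ
  have h₁ : xic n (2 * (a - (u + 1)) * (b - v) - (m + 1 : ℕ) * (a - b - (u + 1) + v) -
      (m + 1 : ℕ) * ((m + 1 : ℕ) + 1) / 2) = Z * xic n (u + v - a - b) := by
    rw [hZ, ← xic_add]
    push_cast
    ring_nf
  have h₂ : xic n (2 * (a - u) * (b - (v + 1)) - m * (a - b - u + (v + 1)) - m * (m + 1) / 2) =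
      Z * xic n (2 * (u - a) - m) := by
    rw [hZ, ← xic_add]
    ring_nf
  have h₃ : xic n (2 * (a - u) * (b - v) - (m + 1 : ℕ) * (a - b - u + v) -
      (m + 1 : ℕ) * ((m + 1 : ℕ) + 1) / 2) = Z * xic n (b - a + u - v - (m + 1)) := by
    rw [hZ, ← xic_add]
    push_cast
    ring_nf
  have hinv := mul_inv_cancel₀ (qn_natCast_add_one_ne_zero hm)
  rw [rCoeff, rCoeff, rCoeff, rCoeff, h₁, h₂, h₃, ← hZ]
  simp only [qfac_succ, qfall_succ' (u + 1), qfall_succ, add_sub_cancel_right, div_eq_mul_inv,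
    mul_inv]
  linear_combination
    Z * qfall n u m * (qfac n m)⁻¹ * (
      qfall n (2 * b - v) m * qn n (2 * b - v - m) * (
        (qn n (m + 1))⁻¹ * qn_exchange_identity a b u v m -
        (xic n (2 * (u - a) - m) * xic n (u - a) - xic n (a - u + m)) * hinv) +
      xic n (2 * (u - a) - m) * xic n (u - a) * hv)

theorem rCoeff_E_zero (a b u v : ℂ) :
    rCoeff n a b u (v - 1) 0 * (qn n v * xic n (u - a)) =
      qn n v * xic n (a - u) * rCoeff n a b u v 0 := by
  have h := rCoeff_F_zero (n := n) b a (2 * b - v) (2 * a - u)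
  rw [show 2 * b - v + 1 = 2 * b - (v - 1) by ring, rCoeff_symm, rCoeff_symm] at h
  convert h using 3 <;> ring_nf

theorem rCoeff_E_succ (a b u v : ℂ) {m : ℕ} (hm : m + 1 < n) :
    rCoeff n a b (u - 1) v m * (qn n u * xic n (b - v)) +
        rCoeff n a b u (v - 1) (m + 1) * (qn n v * xic n (u - a)) =
      qn n (v + m + 1) * xic n (a - u + m + 1) * rCoeff n a b u v (m + 1) +
        qn n (u - m) * xic n (v + m - b) * rCoeff n a b u v m := by
  have h := rCoeff_F_succ b a (2 * b - v) (2 * a - u) hm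
  rw [show 2 * b - v + 1 = 2 * b - (v - 1) by ring, show 2 * a - u + 1 = 2 * a - (u - 1) by ring,
    rCoeff_symm, rCoeff_symm, rCoeff_symm, rCoeff_symm] at h
  ring_nf at h ⊢
  linear_combination h

/-- The coefficient of `e_h ⊗ e_k` in `R_{a,b}(e_u ⊗ e_v)`, extended to integer indices so that the
matrix entries next to the boundary can be addressed. -/
def rEntry (n : ℕ) (a b : ℂ) (h k u v : ℤ) : ℂ :=
  if h + k = u + v ∧ v ≤ h then rCoeff n a b u v (h - v).toNat else 0

theorem rEntry_of_eq {a b : ℂ} {h k u v : ℤ} {m : ℕ} (hh : h = v + m) (hk : k = u - m) :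
    rEntry n a b h k u v = rCoeff n a b u v m := by
  rw [rEntry, if_pos (by lia), show (h - v).toNat = m by lia]

theorem rEntry_eq_zero {a b : ℂ} {h k u v : ℤ} (hne : h + k ≠ u + v ∨ h < v) :
    rEntry n a b h k u v = 0 :=
  if_neg (by lia)

theorem rEntry_neg_one (a b : ℂ) (h : ℤ) (u : ℕ) (v : ℤ) : rEntry n a b h (-1) u v = 0 := by
  by_cases hne : h + (-1) ≠ u + v ∨ h < v
  · exact rEntry_eq_zero hne
  · rw [rEntry_of_eq (m := u + 1) (by lia) (by lia), rCoeff,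
      qfall_eq_zero (j := u) u.lt_succ_self (by simp [qn_zero])]
    simp

theorem rEntry_self (hn : n ≠ 0) (a b : ℂ) (h v : ℤ) {k : ℤ} (hk : k < n) :
    rEntry n a b h k n v = 0 := by
  by_cases hne : h + k ≠ n + v ∨ h < v
  · exact rEntry_eq_zero hne
  · rw [rEntry_of_eq (m := (h - v).toNat) (by lia) (by lia), rCoeff,
      qfall_eq_zero (j := 0) (by lia) (by simp [qn_self hn])]
    simp

theorem Rmat_apply (a b : ℂ) (h k u v : Fin n) :
    Rmat n a b (h, k) (u, v) = rEntry n a b (h : ℕ) (k : ℕ) (u : ℕ) (v : ℕ) := by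
  by_cases hne : (h : ℕ) + (k : ℕ) = (u : ℕ) + (v : ℕ) ∧ (v : ℕ) ≤ (h : ℕ)
  · have hm : (h : ℕ) - v < n := by omega
    rw [rEntry_of_eq (m := (h : ℕ) - v) (by omega) (by omega)]
    simp only [Rmat, Matrix.of_apply, if_pos hne, qbin_sub_natCast _ hm, rCoeff, Int.cast_natCast]
    have := qfac_ne_zero hm
    field_simp
  · rw [rEntry_eq_zero (by omega)]
    simp only [Rmat, Matrix.of_apply, if_neg hne]

theorem rEntry_F (a b : ℂ) {h k u v : ℤ} (hhv : h - v < n) :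
    rEntry n a b h k (u + 1) v * qint n (2 * a - u) * xic n (b - v) +
        rEntry n a b h k u (v + 1) * qint n (2 * b - v) * xic n (u - a) =
      xic n (a - k) * (qint n (2 * b - h + 1) * rEntry n a b (h - 1) k u v) +
        xic n (h - b) * (qint n (2 * a - k + 1) * rEntry n a b h (k - 1) u v) := by
  simp only [qint]
  rcases eq_or_ne (h + k) (u + v + 1) with hw | hw
  · rcases lt_trichotomy h v with hlt | rfl | hgt
    · simp only [rEntry_eq_zero (.inr hlt), rEntry_eq_zero (.inr (by lia : h < v + 1)),
        rEntry_eq_zero (.inr (by lia : h - 1 < v))]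
      ring
    · obtain rfl : k = u + 1 := by lia
      rw [rEntry_of_eq (m := 0) (by lia) (by lia), rEntry_of_eq (k := u + 1 - 1) (m := 0) (by lia)
        (by lia), rEntry_eq_zero (.inr (by lia : h < h + 1)), rEntry_eq_zero (.inr (by lia))]
      have key := rCoeff_F_zero (n := n) a b u h
      push_cast at key ⊢
      ring_nf at key ⊢
      linear_combination key / qn n 1
    · obtain ⟨m, rfl⟩ : ∃ m : ℕ, h = v + m + 1 := ⟨(h - v - 1).toNat, by lia⟩
      obtain rfl : k = u - m := by lia
      rw [rEntry_of_eq (m := m + 1) (by lia) (by lia), rEntry_of_eq (m := m) (by lia) (by lia),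
        rEntry_of_eq (m := m) (by lia) (by lia), rEntry_of_eq (m := m + 1) (by lia) (by lia)]
      have key := rCoeff_F_succ a b u v (m := m) (n := n) (by lia)
      push_cast at key ⊢
      ring_nf at key ⊢
      linear_combination key / qn n 1
  · simp only [rEntry_eq_zero (.inl (by lia : h + k ≠ u + 1 + v)),
      rEntry_eq_zero (.inl (by lia : h + k ≠ u + (v + 1))),
      rEntry_eq_zero (.inl (by lia : h - 1 + k ≠ u + v)),
      rEntry_eq_zero (.inl (by lia : h + (k - 1) ≠ u + v))]
    ring

theorem rEntry_E (a b : ℂ) {h k u v : ℤ} (huk : u - k < n) :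
    rEntry n a b h k (u - 1) v * qint n u * xic n (b - v) +
        rEntry n a b h k u (v - 1) * qint n v * xic n (u - a) =
      xic n (a - k) * (qint n (h + 1) * rEntry n a b (h + 1) k u v) +
        xic n (h - b) * (qint n (k + 1) * rEntry n a b h (k + 1) u v) := by
  simp only [qint]
  rcases eq_or_ne (h + k) (u + v - 1) with hw | hw
  · rcases lt_trichotomy (h + 1) v with hlt | rfl | hgt
    · simp only [rEntry_eq_zero (.inr (by lia : h < v)), rEntry_eq_zero (.inr (by lia : h < v - 1)),
        rEntry_eq_zero (.inr (by lia : h + 1 < v))]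
      ring
    · obtain rfl : k = u := by lia
      rw [rEntry_eq_zero (.inr (by lia)), rEntry_of_eq (m := 0) (by lia) (by lia),
        rEntry_of_eq (m := 0) (by lia) (by lia), rEntry_eq_zero (.inr (by lia))]
      have key := rCoeff_E_zero (n := n) a b k (h + 1)
      push_cast at key ⊢
      linear_combination key / qn n 1
    · obtain ⟨m, rfl⟩ : ∃ m : ℕ, h = v + m := ⟨(h - v).toNat, by lia⟩
      obtain rfl : k = u - m - 1 := by lia
      rw [rEntry_of_eq (m := m) (by lia) (by lia), rEntry_of_eq (m := m + 1) (by lia) (by lia),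
        rEntry_of_eq (m := m + 1) (by lia) (by lia), rEntry_of_eq (m := m) (by lia) (by lia)]
      have key := rCoeff_E_succ a b u v (m := m) (n := n) (by lia)
      push_cast at key ⊢
      ring_nf at key ⊢
      linear_combination key / qn n 1
  · simp only [rEntry_eq_zero (.inl (by lia : h + k ≠ u - 1 + v)),
      rEntry_eq_zero (.inl (by lia : h + k ≠ u + (v - 1))),
      rEntry_eq_zero (.inl (by lia : h + 1 + k ≠ u + v)),
      rEntry_eq_zero (.inl (by lia : h + (k + 1) ≠ u + v))]
    ring

theorem Rmat_mul_coprod_F (a b : ℂ) :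
    Rmat n a b * coprod n a b (Fmat n a) (Fmat n b) =
      coprod n b a (Fmat n b) (Fmat n a) * Rmat n a b := by
  ext ⟨h, k⟩ ⟨u, v⟩
  have hn : n ≠ 0 := h.pos.ne'
  change (Rmat n a b (h, k) ᵥ* _) (u, v) = (_ *ᵥ fun p ↦ Rmat n a b p (u, v)) (h, k)
  simp only [vecMul_coprod_apply, coprod_mulVec_apply, Rmat_apply]
  rw [vecMul_Fmat_apply a (f := fun i ↦ rEntry n a b (h : ℕ) (k : ℕ) i (v : ℕ))
      (rEntry_self hn a b _ _ (by omega)),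
    vecMul_Fmat_apply b (f := fun i ↦ rEntry n a b (h : ℕ) (k : ℕ) (u : ℕ) i)
      (rEntry_eq_zero (.inr (by omega))),
    Fmat_mulVec_apply b (f := fun i ↦ rEntry n a b i (k : ℕ) (u : ℕ) (v : ℕ))
      (rEntry_eq_zero (.inr (by omega))),
    Fmat_mulVec_apply a (f := fun i ↦ rEntry n a b (h : ℕ) i (u : ℕ) (v : ℕ))
      (rEntry_neg_one a b _ _ _)]
  exact rEntry_F a b (by omega)

theorem Rmat_mul_coprod_E (a b : ℂ) :
    Rmat n a b * coprod n a b (Emat n) (Emat n) =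
      coprod n b a (Emat n) (Emat n) * Rmat n a b := by
  ext ⟨h, k⟩ ⟨u, v⟩
  change (Rmat n a b (h, k) ᵥ* _) (u, v) = (_ *ᵥ fun p ↦ Rmat n a b p (u, v)) (h, k)
  simp only [vecMul_coprod_apply, coprod_mulVec_apply, Rmat_apply]
  rw [vecMul_Emat_apply fun i ↦ rEntry n a b (h : ℕ) (k : ℕ) i (v : ℕ),
    vecMul_Emat_apply fun i ↦ rEntry n a b (h : ℕ) (k : ℕ) (u : ℕ) i,
    Emat_mulVec_apply fun i ↦ rEntry n a b i (k : ℕ) (u : ℕ) (v : ℕ),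
    Emat_mulVec_apply fun i ↦ rEntry n a b (h : ℕ) i (u : ℕ) (v : ℕ)]
  exact rEntry_E a b (by omega)

end RMatrix

section ClebschGordan

variable {n : ℕ}

/-- The `z`-th term of the sum defining `C^{a,b,c}_{u,v,t}`, where `c = a + b - N` and `t = z + w`,
together with the sign and the power of `ξ` that depend on `u` and `v`. -/
def cgTerm (n : ℕ) (a b : ℂ) (N : ℕ) (u v : ℤ) (z w : ℕ) : ℂ :=
  (-1) ^ (v - w) *
    xic n ((v * (2 * b - v + 1) - u * (2 * a - u + 1) +
      (z - w) * (2 * (a + b - N) - (z + w) + 1)) / 2) *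
    qbin n N (u - z) * qbin n (2 * a - u + z) (2 * a - u) * qbin n (2 * b - v + w) (2 * b - v)

/-- The Clebsch–Gordan coefficient `C^{a,b,c}_{u,v,t}`, where `c = a + b - N`, without the factor
`cgNorm`, which depends neither on `u` nor on `v`. -/
def cgSum (n : ℕ) (a b : ℂ) (N t : ℕ) (u v : ℤ) : ℂ :=
  ∑ p ∈ antidiagonal t, cgTerm n a b N u v p.1 p.2

/-- The factor `√-1^{-N} [2c¦a+b+c-(n-1)] / [2c¦2c-t]` of `C^{a,b,c}_{u,v,t}`, where
`N = a + b - c`. -/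
def cgNorm (n : ℕ) (c : ℂ) (N t : ℕ) : ℂ :=
  Complex.exp (-(π * I * N / 2)) * qbin n (2 * c) (2 * c + N - (n - 1)) / qbin n (2 * c) (2 * c - t)

/-- The coordinates of `Y_c^{a,b}(e_t) / cgNorm`, extended to integer indices so that the entries
next to the boundary can be addressed. -/
def cgEntry (n : ℕ) (a b : ℂ) (N t : ℕ) (u v : ℤ) : ℂ :=
  if u + v = N + t then cgSum n a b N t u v else 0

theorem cgTerm_eq_zero {a b : ℂ} {N : ℕ} {u v : ℤ} {z w : ℕ} (huv : u + v = N + (z + w))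
    (h : u < 0 ∨ v < 0) : cgTerm n a b N u v z w = 0 := by
  have hq : qbin n N (u - z) = 0 := by
    exact_mod_cast qbin_natCast_intCast_eq_zero (n := n) (N := N) (i := u - z) (by lia)
  rw [cgTerm, hq]
  ring

theorem cgEntry_eq_zero {a b : ℂ} {N t : ℕ} {u v : ℤ} (h : u + v ≠ N + t ∨ u < 0 ∨ v < 0) :
    cgEntry n a b N t u v = 0 := by
  by_cases huv : u + v = N + t
  · rw [cgEntry, if_pos huv, cgSum]
    refine sum_eq_zero fun p hp ↦ cgTerm_eq_zero ?_ (h.resolve_left (not_not.mpr huv))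
    rw [huv, ← HasAntidiagonal.mem_antidiagonal.mp hp, Nat.cast_add]
  · exact if_neg huv

theorem cgTerm_succ_left (a b : ℂ) {N : ℕ} {u v : ℤ} {z w : ℕ} (hz : z + 1 < n)
    (huv : u + v = N + (z + w + 1)) :
    xic n (-w) * qn n (z + 1) * cgTerm n a b N u v (z + 1) w =
      qn n (2 * a - u + 1) * xic n (b - v) * cgTerm n a b N (u - 1) v z w := by
  have huv' : (u : ℂ) + v = N + (z + w + 1) := by exact_mod_cast huv
  have hx : xic n (-w) * xic n ((v * (2 * b - v + 1) - u * (2 * a - u + 1) +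
      ((z + 1) - w) * (2 * (a + b - N) - ((z + 1) + w) + 1)) / 2) =
      xic n (b - v) * xic n ((v * (2 * b - v + 1) - (u - 1) * (2 * a - u + 1 + 1) +
        (z - w) * (2 * (a + b - N) - (z + w) + 1)) / 2) := by
    rw [← xic_add, ← xic_add]
    congr 1
    linear_combination huv'
  have hq := qn_mul_qbin_add_succ (2 * a - u) hz
  simp only [cgTerm]
  push_cast
  rw [sub_sub (u : ℂ) 1, add_comm (1 : ℂ) z, sub_sub_eq_add_sub (2 * a), add_sub_right_comm (2 * a)]
  linear_combination (-1) ^ (v - w) * qbin n N (u - (z + 1)) *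
    qbin n (2 * b - v + w) (2 * b - v) *
    (qn n (z + 1) * qbin n (2 * a - u + (z + 1)) (2 * a - u) * hx +
      xic n (b - v) * xic n ((v * (2 * b - v + 1) - (u - 1) * (2 * a - u + 1 + 1) +
        (z - w) * (2 * (a + b - N) - (z + w) + 1)) / 2) * hq)

theorem cgTerm_succ_right (a b : ℂ) {N : ℕ} {u v : ℤ} {z w : ℕ} (hw : w + 1 < n)
    (huv : u + v = N + (z + w + 1)) :
    xic n z * qn n (w + 1) * cgTerm n a b N u v z (w + 1) =
      xic n (u - a) * qn n (2 * b - v + 1) * cgTerm n a b N u (v - 1) z w := by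
  have huv' : (u : ℂ) + v = N + (z + w + 1) := by exact_mod_cast huv
  have hx : xic n z * xic n ((v * (2 * b - v + 1) - u * (2 * a - u + 1) +
      (z - (w + 1)) * (2 * (a + b - N) - (z + (w + 1)) + 1)) / 2) =
      xic n (u - a) * xic n (((v - 1) * (2 * b - v + 1 + 1) - u * (2 * a - u + 1) +
        (z - w) * (2 * (a + b - N) - (z + w) + 1)) / 2) := by
    rw [← xic_add, ← xic_add]
    congr 1
    linear_combination -huv'
  have hq := qn_mul_qbin_add_succ (2 * b - v) hw
  simp only [cgTerm]
  push_cast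
  rw [sub_sub v 1, add_comm (1 : ℤ) w, sub_sub_eq_add_sub (2 * b), add_sub_right_comm (2 * b)]
  linear_combination (-1) ^ (v - (w + 1)) * qbin n N (u - z) *
    qbin n (2 * a - u + z) (2 * a - u) *
    (qn n (w + 1) * qbin n (2 * b - v + (w + 1)) (2 * b - v) * hx +
      xic n (u - a) * xic n (((v - 1) * (2 * b - v + 1 + 1) - u * (2 * a - u + 1) +
        (z - w) * (2 * (a + b - N) - (z + w) + 1)) / 2) * hq)

theorem qn_natCast_add (z w : ℕ) :
    qn n ((z + w : ℕ) : ℂ) = xic n (-w) * qn n z + xic n z * qn n w := by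
  simp only [qn, mul_sub, ← xic_add]
  push_cast
  ring_nf

theorem qn_mul_cgSum_succ (a b : ℂ) {N t : ℕ} {u v : ℤ} (ht : t + 1 < n)
    (huv : u + v = N + (t + 1)) :
    qn n (t + 1) * cgSum n a b N (t + 1) u v =
      qn n (2 * a - u + 1) * xic n (b - v) * cgSum n a b N t (u - 1) v +
        xic n (u - a) * qn n (2 * b - v + 1) * cgSum n a b N t u (v - 1) := by
  calc qn n (t + 1) * cgSum n a b N (t + 1) u v
      = ∑ p ∈ antidiagonal (t + 1), xic n (-p.2) * qn n p.1 * cgTerm n a b N u v p.1 p.2 +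
          ∑ p ∈ antidiagonal (t + 1), xic n p.1 * qn n p.2 * cgTerm n a b N u v p.1 p.2 := by
        rw [cgSum, mul_sum, ← sum_add_distrib]
        refine sum_congr rfl fun p hp ↦ ?_
        rw [← add_mul, ← qn_natCast_add, HasAntidiagonal.mem_antidiagonal.mp hp, Nat.cast_succ]
    _ = ∑ p ∈ antidiagonal t, xic n (-p.2) * qn n (p.1 + 1) * cgTerm n a b N u v (p.1 + 1) p.2 +
          ∑ p ∈ antidiagonal t, xic n p.1 * qn n (p.2 + 1) * cgTerm n a b N u v p.1 (p.2 + 1) := by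
        rw [Finset.Nat.sum_antidiagonal_succ, Finset.Nat.sum_antidiagonal_succ']
        simp [qn_zero]
    _ = _ := by
        rw [cgSum, cgSum, mul_sum, mul_sum]
        congr 1 <;> refine sum_congr rfl fun p hp ↦ ?_
        all_goals rw [HasAntidiagonal.mem_antidiagonal] at hp
        · exact cgTerm_succ_left a b (by lia) (by lia)
        · exact cgTerm_succ_right a b (by lia) (by lia)

theorem coprod_F_mulVec_cgEntry (a b : ℂ) {N t : ℕ} (ht : t + 1 < n) :
    (coprod n a b (Fmat n a) (Fmat n b) *ᵥ fun p ↦ cgEntry n a b N t (p.1 : ℕ) (p.2 : ℕ)) =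
      qint n (t + 1) • fun p ↦ cgEntry n a b N (t + 1) (p.1 : ℕ) (p.2 : ℕ) := by
  ext ⟨h, k⟩
  rw [coprod_mulVec_apply,
    Fmat_mulVec_apply a (f := fun i ↦ cgEntry n a b N t i (k : ℕ)) (cgEntry_eq_zero (by lia)),
    Fmat_mulVec_apply b (f := fun i ↦ cgEntry n a b N t (h : ℕ) i) (cgEntry_eq_zero (by lia)),
    Pi.smul_apply, smul_eq_mul]
  by_cases hw : ((h : ℕ) : ℤ) + (k : ℕ) = N + (t + 1)
  · rw [cgEntry, cgEntry, cgEntry, if_pos (by lia), if_pos (by lia), if_pos (by simpa using hw)]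
    have hrec := qn_mul_cgSum_succ a b ht hw
    simp only [qint, Int.cast_natCast] at hrec ⊢
    linear_combination -hrec / qn n 1
  · rw [cgEntry_eq_zero (by lia), cgEntry_eq_zero (by lia), cgEntry_eq_zero (by push_cast; lia)]
    ring

theorem cgEntry_zero_of_add_eq (hn : n ≠ 0) (a b : ℂ) {N : ℕ} {u v : ℤ} (huv : u + v = N) :
    cgEntry n a b N 0 u v = (-1) ^ v *
      xic n ((v * (2 * b - v + 1) - u * (2 * a - u + 1)) / 2) * qbin n N (N - v) := by
  have huv' : (u : ℂ) = N - v := by exact_mod_cast eq_sub_of_add_eq huv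
  rw [cgEntry, if_pos (by simpa using huv)]
  simp [cgSum, cgTerm, qbin_self hn, huv']

theorem cgEntry_E_zero (a b : ℂ) {N : ℕ} (hN : N < n) (h k : ℕ) :
    xic n (b - k) * (qint n (h + 1) * cgEntry n a b N 0 (h + 1) k) +
      xic n (h - a) * (qint n (k + 1) * cgEntry n a b N 0 h (k + 1)) = 0 := by
  rcases eq_or_ne (h + k + 1) N with rfl | hw
  · have hq := qn_mul_qbin_sub_succ (n := n) (h + k + 1 : ℕ) (k := k) (by lia)
    have hx : xic n (b - k) *
        xic n ((k * (2 * b - k + 1) - (h + 1) * (2 * a - (h + 1) + 1)) / 2) =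
        xic n (h - a) *
          xic n (((k + 1) * (2 * b - (k + 1) + 1) - h * (2 * a - h + 1)) / 2) := by
      rw [← xic_add, ← xic_add]
      ring_nf
    rw [cgEntry_zero_of_add_eq (by lia) a b (by lia), cgEntry_zero_of_add_eq (by lia) a b (by lia),
      zpow_add_one₀ (by norm_num)]
    simp only [qint]
    push_cast at hq ⊢
    rw [show (h + k + 1 - k : ℂ) = h + 1 by ring] at hq ⊢
    linear_combination (-1) ^ (k : ℤ) / qn n 1 *
      (qn n (h + 1) * qbin n (h + k + 1) (h + 1) * hx - xic n (h - a) *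
        xic n (((k + 1) * (2 * b - (k + 1) + 1) - h * (2 * a - h + 1)) / 2) * hq)
  · rw [cgEntry_eq_zero (by lia), cgEntry_eq_zero (by lia)]
    ring

theorem coprod_E_mulVec_cgEntry_zero (a b : ℂ) {N : ℕ} (hN : N < n) :
    (coprod n a b (Emat n) (Emat n) *ᵥ fun p ↦ cgEntry n a b N 0 (p.1 : ℕ) (p.2 : ℕ)) = 0 := by
  ext ⟨h, k⟩
  rw [coprod_mulVec_apply, Emat_mulVec_apply fun i ↦ cgEntry n a b N 0 i (k : ℕ),
    Emat_mulVec_apply fun i ↦ cgEntry n a b N 0 (h : ℕ) i]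
  exact cgEntry_E_zero a b hN _ _

theorem CG_eq (a b : ℂ) (N u v t : ℕ) :
    CG n a b (a + b - N) u v t = cgNorm n (a + b - N) N t * cgSum n a b N t u v := by
  rw [CG, cgNorm, cgSum, Finset.Nat.sum_antidiagonal_eq_sum_range_succ_mk, mul_sum, mul_sum]
  refine sum_congr rfl fun z hz ↦ ?_
  obtain ⟨w, rfl⟩ := Nat.exists_eq_add_of_le (mem_range_succ_iff.mp hz)
  have hsign : (-1 : ℂ) ^ ((v : ℤ) - w) = (-1) ^ ((v : ℤ) - (z + w)) * (-1) ^ z := by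
    rw [← zpow_natCast, ← zpow_add₀ (by norm_num)]
    ring_nf
  simp only [cgTerm, Nat.add_sub_cancel_left, Int.cast_natCast, Nat.cast_add, hsign, add_div,
    xic_add]
  ring_nf

theorem Yinc_apply (a b : ℂ) (N : ℕ) (u v t : Fin n) :
    Yinc n a b (a + b - N) (u, v) t =
      cgNorm n (a + b - N) N (t : ℕ) * cgEntry n a b N (t : ℕ) (u : ℕ) (v : ℕ) := by
  have hiff : ((u : ℕ) : ℂ) + (v : ℕ) - (t : ℕ) = a + b - (a + b - N) ↔
      ((u : ℕ) : ℤ) + (v : ℕ) = N + (t : ℕ) := by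
    rw [sub_sub_cancel, sub_eq_iff_eq_add]
    norm_cast
  simp only [Yinc, Matrix.of_apply, hiff, cgEntry, CG_eq, mul_ite, mul_zero]

end ClebschGordan

section HighestWeight

variable {n : ℕ}

theorem Rmat_mulVec_apply_of_weight (a b : ℂ) {N : ℕ} {x : Fin n × Fin n → ℂ}
    (hx : ∀ u v : Fin n, (u : ℕ) + v ≠ N → x (u, v) = 0) {h k : Fin n} (hhk : (h : ℕ) + k ≠ N) :
    (Rmat n a b *ᵥ x) (h, k) = 0 := by
  rw [Matrix.mulVec, dotProduct]
  refine sum_eq_zero fun ⟨u, v⟩ _ ↦ ?_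
  by_cases huv : (u : ℕ) + v = N
  · rw [Rmat_apply, rEntry_eq_zero (by omega), zero_mul]
  · rw [hx u v huv, mul_zero]

theorem Rmat_mulVec_apply_zero (a b : ℂ) (x : Fin n × Fin n → ℂ) {z : Fin n} (hz : (z : ℕ) = 0)
    (k : Fin n) : (Rmat n a b *ᵥ x) (z, k) = xic n (2 * (a - (k : ℕ)) * b) * x (k, z) := by
  have hne : ∀ p ∈ univ, p ≠ (k, z) → Rmat n a b (z, k) p * x p = 0 := by
    rintro ⟨u, v⟩ - huv
    simp only [Ne, Prod.mk.injEq, Fin.ext_iff] at huv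
    rw [Rmat_apply, rEntry_eq_zero (by omega), zero_mul]
  rw [Matrix.mulVec, dotProduct, sum_eq_single (k, z) hne (by simp), Rmat_apply,
    rEntry_of_eq (m := 0) (by simp) (by simp), rCoeff_zero, hz, Int.cast_natCast, Nat.cast_zero,
    Int.cast_zero, sub_zero]

theorem Emat_mulVec_apply_of_eq_add_one {i j : Fin n} (hij : (j : ℕ) = i + 1) (x : Fin n → ℂ) :
    (Emat n *ᵥ x) i = qint n (j : ℕ) * x j := by
  simp [Emat, Matrix.mulVec, dotProduct, ← hij, Fin.val_inj]

theorem eq_zero_of_coprod_E_mulVec_eq_zero (a b : ℂ) {N : ℕ} {x : Fin n × Fin n → ℂ}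
    (hx : ∀ u v : Fin n, (u : ℕ) + v ≠ N → x (u, v) = 0)
    (hE : coprod n a b (Emat n) (Emat n) *ᵥ x = 0)
    (h₀ : ∀ u v : Fin n, (u : ℕ) = 0 → (v : ℕ) = N → x (u, v) = 0) (hN : N < n) : x = 0 := by
  suffices key : ∀ i : ℕ, ∀ u v : Fin n, (u : ℕ) = i → (u : ℕ) + v = N → x (u, v) = 0 by
    ext ⟨u, v⟩
    by_cases huv : (u : ℕ) + v = N
    exacts [key _ u v rfl huv, hx u v huv]
  intro i
  induction i with
  | zero => exact fun u v hu huv ↦ h₀ u v hu (by omega)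
  | succ i ih =>
    intro u v hu huv
    have hE' := congrFun hE (⟨i, by omega⟩, v)
    rw [coprod_mulVec_apply, Emat_mulVec_apply_of_eq_add_one (j := u) hu,
      Emat_mulVec_apply_of_eq_add_one (j := ⟨v + 1, by omega⟩) rfl,
      ih ⟨i, _⟩ _ rfl (by dsimp only; omega), mul_zero,
      mul_zero, add_zero, Pi.zero_apply] at hE'
    have hq := qint_ne_zero (by omega) (qn_natCast_ne_zero (by omega : (u : ℕ) ≠ 0) u.isLt)
    simpa [xic_ne_zero, hq] using hE'

theorem xic_twist_corner (a b : ℂ) {N : ℕ} (hN : N < n) :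
    xic n (2 * (b - N) * a) * cgEntry n b a N 0 N 0 =
      xic n ((a + b - N) * (a + b - N + 1 - n) - a * (a + 1 - n) - b * (b + 1 - n)) *
        cgEntry n a b N 0 0 N := by
  have hn : n ≠ 0 := by lia
  rw [cgEntry_zero_of_add_eq hn b a (by simp), cgEntry_zero_of_add_eq hn a b (by simp)]
  simp only [zpow_zero, zpow_natCast, one_mul, Int.cast_zero, Int.cast_natCast, sub_zero, sub_self,
    zero_mul, zero_sub, qbin_self hn, qbin_natCast_zero hN, mul_one,
    ← xic_neg_natCast_mul_self hn N, ← xic_add]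
  ring_nf

theorem Rmat_mulVec_cgEntry_zero (a b : ℂ) {N : ℕ} (hN : N < n) :
    (Rmat n b a *ᵥ fun p ↦ cgEntry n b a N 0 (p.1 : ℕ) (p.2 : ℕ)) =
      xic n ((a + b - N) * (a + b - N + 1 - n) - a * (a + 1 - n) - b * (b + 1 - n)) •
        fun p ↦ cgEntry n a b N 0 (p.1 : ℕ) (p.2 : ℕ) := by
  rw [← sub_eq_zero]
  refine eq_zero_of_coprod_E_mulVec_eq_zero a b (fun u v huv ↦ ?_) ?_ (fun u v hu hv ↦ ?_) hN
  · rw [Pi.sub_apply, Pi.smul_apply, cgEntry_eq_zero (.inl (by dsimp only; omega)),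
      Rmat_mulVec_apply_of_weight b a
        (fun h k hhk ↦ cgEntry_eq_zero (.inl (by dsimp only; omega))) huv,
      smul_zero, sub_zero]
  · rw [Matrix.mulVec_sub, Matrix.mulVec_smul, Matrix.mulVec_mulVec, ← Rmat_mul_coprod_E,
      ← Matrix.mulVec_mulVec, coprod_E_mulVec_cgEntry_zero b a hN,
      coprod_E_mulVec_cgEntry_zero a b hN, Matrix.mulVec_zero, smul_zero, sub_zero]
  · rw [Pi.sub_apply, Pi.smul_apply, Rmat_mulVec_apply_zero b a _ hu, sub_eq_zero, smul_eq_mul]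
    simpa [hu, hv] using xic_twist_corner a b hN

end HighestWeight

section Twist

variable {n : ℕ}

theorem Yinc_col (a b : ℂ) (N : ℕ) (t : Fin n) :
    (Yinc n a b (a + b - N)).col t = cgNorm n (a + b - N) N (t : ℕ) •
      fun p : Fin n × Fin n ↦ cgEntry n a b N (t : ℕ) (p.1 : ℕ) (p.2 : ℕ) :=
  funext fun p ↦ Yinc_apply a b N p.1 p.2 t

theorem Rmat_mulVec_Yinc_col_zero (a b : ℂ) {N : ℕ} (hN : N < n) {z : Fin n} (hz : (z : ℕ) = 0) :
    Rmat n b a *ᵥ (Yinc n b a (a + b - N)).col z =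
      xic n ((a + b - N) * (a + b - N + 1 - n) - a * (a + 1 - n) - b * (b + 1 - n)) •
        (Yinc n a b (a + b - N)).col z := by
  rw [Yinc_col, add_comm a b, Yinc_col, add_comm b a, hz, Matrix.mulVec_smul,
    Rmat_mulVec_cgEntry_zero a b hN, smul_comm]

theorem cgNorm_mul_qint (c : ℂ) (N : ℕ) {t : ℕ} (hlt : t + 1 < n)
    (ht : qbin n (2 * c) (2 * c - t) ≠ 0)
    (hs : qbin n (2 * c) (2 * c - (t + 1 : ℕ)) ≠ 0) :
    cgNorm n c N t * qint n (t + 1) = qint n (2 * c - t) * cgNorm n c N (t + 1) := by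
  have hq := qn_mul_qbin_sub_succ (2 * c) hlt
  simp only [cgNorm, qint, Nat.cast_add_one] at hs ⊢
  field_simp
  linear_combination qbin n (2 * c) (2 * c + N - (n - 1)) / qn n 1 * hq

theorem coprod_F_mulVec_Yinc_col (a b : ℂ) {N : ℕ} {s t : Fin n} (hst : (s : ℕ) = t + 1)
    (ht : qbin n (2 * (a + b - N)) (2 * (a + b - N) - (t : ℕ)) ≠ 0)
    (hs : qbin n (2 * (a + b - N)) (2 * (a + b - N) - (s : ℕ)) ≠ 0) :
    coprod n a b (Fmat n a) (Fmat n b) *ᵥ (Yinc n a b (a + b - N)).col t =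
      qint n (2 * (a + b - N) - (t : ℕ)) • (Yinc n a b (a + b - N)).col s := by
  have hlt : (t : ℕ) + 1 < n := by omega
  rw [hst] at hs
  rw [Yinc_col, Yinc_col, Matrix.mulVec_smul, coprod_F_mulVec_cgEntry a b hlt, smul_smul, smul_smul,
    hst, cgNorm_mul_qint _ N hlt ht hs]

theorem Rmat_mulVec_Yinc_col (a b : ℂ) {N : ℕ} (hN : N < n)
    (hc : ∀ t < n, qbin n (2 * (a + b - N)) (2 * (a + b - N) - t) ≠ 0) (t : Fin n) :
    Rmat n b a *ᵥ (Yinc n b a (a + b - N)).col t =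
      xic n ((a + b - N) * (a + b - N + 1 - n) - a * (a + 1 - n) - b * (b + 1 - n)) •
        (Yinc n a b (a + b - N)).col t := by
  obtain ⟨t, ht⟩ := t
  induction t with
  | zero => exact Rmat_mulVec_Yinc_col_zero a b hN rfl
  | succ t ih =>
    have ht' : t < n := by lia
    have hq : qint n (2 * (a + b - N) - t) ≠ 0 :=
      qint_ne_zero (by lia) (qn_ne_zero_of_qbin_ne_zero ht t.lt_succ_self (hc _ ht))
    have hab := coprod_F_mulVec_Yinc_col a b (s := ⟨t + 1, ht⟩) (t := ⟨t, ht'⟩) rfl (hc t ht')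
      (hc _ ht)
    have hba := coprod_F_mulVec_Yinc_col b a (N := N) (s := ⟨t + 1, ht⟩) (t := ⟨t, ht'⟩) rfl
      (by rw [add_comm b a]; exact hc t ht') (by rw [add_comm b a]; exact hc _ ht)
    rw [add_comm b a] at hba
    refine smul_right_injective _ hq ?_
    dsimp only at hab hba ⊢
    rw [← Matrix.mulVec_smul, ← hba, Matrix.mulVec_mulVec, Rmat_mul_coprod_F,
      ← Matrix.mulVec_mulVec, ih ht', Matrix.mulVec_smul, hab, smul_comm]

end Twist

theorem twist_relation_general (n : ℕ) (a b c : ℂ)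
    (hc : ∀ t < n, qbin n (2 * c) (2 * c - t) ≠ 0) (habc : InZn n (a + b - c)) :
    Rmat n b a * Yinc n b a c
      = xic n (c * (c + 1 - (n : ℂ)) - a * (a + 1 - (n : ℂ)) - b * (b + 1 - (n : ℂ))) •
          Yinc n a b c := by
  obtain ⟨N, hN, hcN⟩ := habc
  obtain rfl : c = a + b - N := by linear_combination -hcN
  ext p t
  exact congrFun (Rmat_mulVec_Yinc_col a b hN hc t) p

theorem twist_relation (n : ℕ) (hn : 2 ≤ n) (a b c : ℂ)
    (ha : NotHalfInt a) (hb : NotHalfInt b) (hc : NotHalfInt c)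
    (habc : InZn n (a + b - c)) :
    Rmat n b a * Yinc n b a c
      = xic n (c * (c + 1 - (n : ℂ)) - a * (a + 1 - (n : ℂ)) - b * (b + 1 - (n : ℂ))) •
          Yinc n a b c :=
  twist_relation_general n a b c (fun _ ht ↦ hc.qbin_two_mul_ne_zero ht) habc

end
end

section
/- Let 0 < a < π and let (a_n) be a sequence of integers with lim_{n→∞} 2πa_n/n = a (and 0 ≤ 2a_n ≤ n−1 for all n). Then lim_{n→∞} (π/n) · Σ_{k=1}^{2a_n} log(2 sin(kπ/n)) = ∫_0^a log|2 sin t| dt = −Λ(a). -/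
open Complex Finset Filter
open scoped Matrix Kronecker Real

noncomputable section

/-!
With step `h = π / n`, the sum is a right-endpoint Riemann sum: it is the integral over
`(0, m * h]` of `log (2 * sin (s t))`, where `s t` is the least multiple of `h` that is at least
`t`. As `n → ∞`, `s t → t`, so the integrands converge on `(0, a)` and only a majorant is needed to
pass to the limit. Since `m < n`, averaging `s t < t + h` with `s t ≤ m * h ≤ π - h` gives
`t ≤ s t ≤ (t + π) / 2`. On an interval inside `(0, π)`, the concave function `sin` is at least its
smaller endpoint value, so `|log (sin (s t))| ≤ |log (sin t)| + |log (sin ((t + π) / 2))|`, and the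
right-hand side is integrable.
-/

section MovingEndpoint

open MeasureTheory

variable {ι E : Type*} {l : Filter ι}

theorem tendsto_indicator_Ioc_of_ne [TopologicalSpace E] [Zero E] {F : ι → ℝ → E} {f : ℝ → E}
    {c : ι → ℝ} {x a t : ℝ} (hc : Tendsto c l (nhds a)) (hta : t ≠ a)
    (hF : t ∈ Set.Ioo x a → Tendsto (fun i => F i t) l (nhds (f t))) :
    Tendsto (fun i => (Set.Ioc x (c i)).indicator (F i) t) l
      (nhds ((Set.Ioc x a).indicator f t)) := by
  by_cases hxt : x < t
  · rcases hta.lt_or_gt with ht | ht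
    · rw [Set.indicator_of_mem (Set.mem_Ioc.2 ⟨hxt, ht.le⟩)]
      refine (hF ⟨hxt, ht⟩).congr' ?_
      filter_upwards [hc.eventually_const_lt ht] with i hi
      rw [Set.indicator_of_mem (Set.mem_Ioc.2 ⟨hxt, hi.le⟩)]
    · rw [Set.indicator_of_notMem fun h => ht.not_ge (Set.mem_Ioc.1 h).2]
      refine tendsto_const_nhds.congr' ?_
      filter_upwards [hc.eventually_lt_const ht] with i hi
      rw [Set.indicator_of_notMem fun h => hi.not_ge (Set.mem_Ioc.1 h).2]
  · simp only [Set.indicator_of_notMem fun h : t ∈ Set.Ioc x _ => hxt h.1, tendsto_const_nhds]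

variable [NormedAddCommGroup E] [NormedSpace ℝ E] [l.IsCountablyGenerated]

theorem tendsto_intervalIntegral_of_dominated_of_tendsto_right {μ : Measure ℝ}
    [NullSingletonClass μ] {F : ι → ℝ → E} {f : ℝ → E} {G : ℝ → ℝ} {c : ι → ℝ} {x a b : ℝ}
    (hc : Tendsto c l (nhds a)) (hxc : ∀ᶠ i in l, x ≤ c i) (hcb : ∀ᶠ i in l, c i ≤ b)
    (hF_meas : ∀ᶠ i in l, AEStronglyMeasurable (F i) μ)
    (hG : IntegrableOn G (Set.Ioc x b) μ)
    (hFG : ∀ᶠ i in l, ∀ t ∈ Set.Ioc x (c i), ‖F i t‖ ≤ G t)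
    (hFf : ∀ t ∈ Set.Ioo x a, Tendsto (fun i => F i t) l (nhds (f t))) :
    Tendsto (fun i => ∫ t in x..c i, F i t ∂μ) l (nhds (∫ t in x..a, f t ∂μ)) := by
  rcases l.eq_or_neBot with rfl | _
  · exact tendsto_bot
  have hxa : x ≤ a := ge_of_tendsto hc hxc
  have integral_eq_indicator {y : ℝ} (g : ℝ → E) (hxy : x ≤ y) :
      ∫ t in x..y, g t ∂μ = ∫ t, (Set.Ioc x y).indicator g t ∂μ := by
    rw [integral_indicator measurableSet_Ioc, intervalIntegral.integral_of_le hxy]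
  rw [integral_eq_indicator f hxa]
  have tendsto_integral_indicator :
      Tendsto (fun i => ∫ t, (Set.Ioc x (c i)).indicator (F i) t ∂μ) l
        (nhds (∫ t, (Set.Ioc x a).indicator f t ∂μ)) := by
    refine tendsto_integral_filter_of_dominated_convergence
      ((Set.Ioc x b).indicator fun t => ‖G t‖) ?_ ?_
      ((integrable_indicator_iff measurableSet_Ioc).2 hG.norm) ?_
    · exact hF_meas.mono fun i hi => hi.indicator measurableSet_Ioc
    · filter_upwards [hcb, hFG] with i hib hi
      refine Eventually.of_forall fun t => ?_
      calc ‖(Set.Ioc x (c i)).indicator (F i) t‖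
          = (Set.Ioc x (c i)).indicator (fun u => ‖F i u‖) t := norm_indicator_eq_indicator_norm ..
        _ ≤ (Set.Ioc x (c i)).indicator (fun u => ‖G u‖) t :=
          Set.indicator_le_indicator' fun ht => (hi t ht).trans (Real.le_norm_self _)
        _ ≤ (Set.Ioc x b).indicator (fun u => ‖G u‖) t :=
          Set.indicator_le_indicator_of_subset (Set.Ioc_subset_Ioc_right hib)
            (fun _ => norm_nonneg _) t
    · filter_upwards [Measure.ae_ne μ a] with t hta
      exact tendsto_indicator_Ioc_of_ne hc hta (hFf t)
  refine tendsto_integral_indicator.congr' ?_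
  filter_upwards [hxc] with i hi
  exact (integral_eq_indicator (F i) hi).symm

end MovingEndpoint

/-- The least multiple of the step `h > 0` that is at least `t ≥ 0`; composing a function with
`gridCeil h` gives the step function whose integral is its right-endpoint Riemann sum. Because of
the natural-number ceiling, `gridCeil h t = 0` for `t ≤ 0`. -/
def gridCeil (h t : ℝ) : ℝ := ⌈t / h⌉₊ * h

section GridCeil

open MeasureTheory

variable {h t : ℝ}

theorem le_gridCeil (hh : 0 < h) : t ≤ gridCeil h t :=
  (div_le_iff₀ hh).1 (Nat.le_ceil _)

theorem gridCeil_lt_add (hh : 0 < h) (ht : 0 ≤ t) : gridCeil h t < t + h := by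
  calc gridCeil h t < (t / h + 1) * h :=
        mul_lt_mul_of_pos_right (Nat.ceil_lt_add_one (div_nonneg ht hh.le)) hh
    _ = t + h := by rw [add_mul, div_mul_cancel₀ t hh.ne', one_mul]

theorem gridCeil_le_mul (hh : 0 < h) {m : ℕ} (ht : t ≤ m * h) : gridCeil h t ≤ m * h :=
  mul_le_mul_of_nonneg_right (Nat.cast_le.2 (Nat.ceil_le.2 ((div_le_iff₀ hh).2 ht))) hh.le

theorem gridCeil_le_midpoint {c : ℝ} {m : ℕ} (hh : 0 < h) (ht : t ∈ Set.Ioc 0 (m * h))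
    (hc : (m + 1) * h ≤ c) : gridCeil h t ≤ (t + c) / 2 := by
  linarith [gridCeil_lt_add hh ht.1.le, gridCeil_le_mul hh ht.2]

theorem gridCeil_eq_of_mem_Ioc (hh : 0 < h) {k : ℕ}
    (ht : t ∈ Set.Ioc (k * h) ((k + 1 : ℕ) * h)) : gridCeil h t = (k + 1 : ℕ) * h := by
  have ceil_eq : ⌈t / h⌉₊ = k + 1 :=
    (Nat.ceil_eq_iff k.succ_ne_zero).2 ⟨(lt_div_iff₀ hh).2 ht.1, (div_le_iff₀ hh).2 ht.2⟩
  rw [gridCeil, ceil_eq]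

theorem tendsto_gridCeil {ι : Type*} {l : Filter ι} {h : ι → ℝ} (hpos : ∀ᶠ i in l, 0 < h i)
    (hzero : Tendsto h l (nhds 0)) (ht : 0 ≤ t) :
    Tendsto (fun i => gridCeil (h i) t) l (nhds t) := by
  refine tendsto_of_tendsto_of_tendsto_of_le_of_le' tendsto_const_nhds
    (by simpa only [add_zero] using hzero.const_add t)
    (hpos.mono fun i hi => le_gridCeil hi) (hpos.mono fun i hi => (gridCeil_lt_add hi ht).le)

theorem stronglyMeasurable_comp_gridCeil {E : Type*} [TopologicalSpace E] (g : ℝ → E) (h : ℝ) :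
    StronglyMeasurable fun t => g (gridCeil h t) :=
  (StronglyMeasurable.of_discrete (f := fun k : ℕ => g (k * h))).comp_measurable
    (Nat.measurable_ceil.comp (measurable_id.div_const h))

variable {E : Type*} [NormedAddCommGroup E] [NormedSpace ℝ E] [CompleteSpace E]

theorem integral_comp_gridCeil (g : ℝ → E) (hh : 0 < h) (m : ℕ) :
    ∫ t in (0 : ℝ)..m * h, g (gridCeil h t) = h • ∑ k ∈ Finset.Icc 1 m, g (k * h) := by
  have cell_le (k : ℕ) : (k * h : ℝ) ≤ (k + 1 : ℕ) * h := by gcongr; exact k.le_succ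
  have eqOn_cell (k : ℕ) : Set.EqOn (fun _ => g ((k + 1 : ℕ) * h)) (fun t => g (gridCeil h t))
      (Set.uIoc (k * h) ((k + 1 : ℕ) * h)) := fun t ht => by
    rw [Set.uIoc_of_le (cell_le k)] at ht
    simp only [gridCeil_eq_of_mem_Ioc hh ht]
  have integral_cell (k : ℕ) :
      ∫ t in (k * h : ℝ)..(k + 1 : ℕ) * h, g (gridCeil h t) = h • g ((k + 1 : ℕ) * h) := by
    rw [← intervalIntegral.integral_congr_ae (Eventually.of_forall fun _ ht => eqOn_cell k ht),
      intervalIntegral.integral_const]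
    congr 1
    push_cast
    ring
  calc ∫ t in (0 : ℝ)..m * h, g (gridCeil h t)
      = ∑ k ∈ Finset.range m, ∫ t in (k * h : ℝ)..(k + 1 : ℕ) * h, g (gridCeil h t) := by
        rw [intervalIntegral.sum_integral_adjacent_intervals (a := fun k : ℕ => (k * h : ℝ))
          fun k _ => intervalIntegrable_const.congr (eqOn_cell k), Nat.cast_zero, zero_mul]
    _ = h • ∑ k ∈ Finset.range m, g ((k + 1 : ℕ) * h) := by
        simp only [integral_cell, Finset.smul_sum]
    _ = h • ∑ k ∈ Finset.Icc 1 m, g (k * h) := by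
        rw [Finset.range_eq_Ico, Finset.sum_Ico_add' (fun k : ℕ => g (k * h)) 0 m 1]
        rfl

theorem tendsto_riemannSum_of_dominated {ι : Type*} {l : Filter ι} [l.IsCountablyGenerated]
    {g : ℝ → E} {G : ℝ → ℝ} {h : ι → ℝ} {m : ι → ℕ} {a b : ℝ}
    (hpos : ∀ᶠ i in l, 0 < h i) (hzero : Tendsto h l (nhds 0))
    (hm : Tendsto (fun i => m i * h i) l (nhds a)) (hmb : ∀ᶠ i in l, m i * h i ≤ b)
    (hg : ∀ t ∈ Set.Ioo 0 a, ContinuousAt g t) (hG : IntegrableOn G (Set.Ioc 0 b))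
    (hgG : ∀ᶠ i in l, ∀ t ∈ Set.Ioc 0 (m i * h i), ‖g (gridCeil (h i) t)‖ ≤ G t) :
    Tendsto (fun i => h i • ∑ k ∈ Finset.Icc 1 (m i), g (k * h i)) l
      (nhds (∫ t in (0 : ℝ)..a, g t)) := by
  have tendsto_integral : Tendsto (fun i => ∫ t in (0 : ℝ)..m i * h i, g (gridCeil (h i) t)) l
      (nhds (∫ t in (0 : ℝ)..a, g t)) :=
    tendsto_intervalIntegral_of_dominated_of_tendsto_right hm
      (hpos.mono fun i hi => by positivity) hmb
      (Eventually.of_forall fun i =>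
        (stronglyMeasurable_comp_gridCeil g (h i)).aestronglyMeasurable)
      hG hgG fun t ht => (hg t ht).tendsto.comp (tendsto_gridCeil hpos hzero ht.1.le)
  exact tendsto_integral.congr' (hpos.mono fun i hi => integral_comp_gridCeil g hi (m i))

end GridCeil

section LogSin

open MeasureTheory

theorem abs_log_sin_le {s t b : ℝ} (ht : 0 < t) (hts : t ≤ s) (hsb : s ≤ b) (hb : b < π) :
    |Real.log (Real.sin s)| ≤ |Real.log (Real.sin t)| + |Real.log (Real.sin b)| := by
  have sin_t_pos : 0 < Real.sin t := Real.sin_pos_of_pos_of_lt_pi ht (by linarith)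
  have sin_b_pos : 0 < Real.sin b := Real.sin_pos_of_pos_of_lt_pi (by linarith) hb
  have min_le_sin : min (Real.sin t) (Real.sin b) ≤ Real.sin s :=
    strictConcaveOn_sin_Icc.concaveOn.min_le_of_mem_Icc ⟨ht.le, by linarith⟩
      ⟨by linarith, hb.le⟩ ⟨hts, hsb⟩
  have sin_s_pos : 0 < Real.sin s := (lt_min sin_t_pos sin_b_pos).trans_le min_le_sin
  rw [abs_of_nonpos (Real.log_nonpos sin_s_pos.le (Real.sin_le_one s))]
  rcases min_le_iff.1 min_le_sin with h | h
  · linarith [Real.log_le_log sin_t_pos h, neg_abs_le (Real.log (Real.sin t)),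
      abs_nonneg (Real.log (Real.sin b))]
  · linarith [Real.log_le_log sin_b_pos h, neg_abs_le (Real.log (Real.sin b)),
      abs_nonneg (Real.log (Real.sin t))]

theorem abs_log_two_mul_sin_le {s t b : ℝ} (ht : 0 < t) (hts : t ≤ s) (hsb : s ≤ b) (hb : b < π) :
    |Real.log (2 * Real.sin s)| ≤
      Real.log 2 + (|Real.log (Real.sin t)| + |Real.log (Real.sin b)|) := by
  have sin_s_pos : 0 < Real.sin s := Real.sin_pos_of_pos_of_lt_pi (by linarith) (by linarith)
  rw [Real.log_mul two_ne_zero sin_s_pos.ne']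
  calc |Real.log 2 + Real.log (Real.sin s)|
      ≤ |Real.log 2| + |Real.log (Real.sin s)| := abs_add_le _ _
    _ ≤ Real.log 2 + (|Real.log (Real.sin t)| + |Real.log (Real.sin b)|) :=
        add_le_add (abs_of_pos (Real.log_pos one_lt_two)).le (abs_log_sin_le ht hts hsb hb)

theorem intervalIntegrable_log_two_mul_sin_majorant (a b : ℝ) :
    IntervalIntegrable (fun t => Real.log 2 +
      (|Real.log (Real.sin t)| + |Real.log (Real.sin ((t + π) / 2))|)) volume a b := by
  have log_sin_midpoint : IntervalIntegrable (fun t => Real.log (Real.sin ((t + π) / 2)))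
      volume a b :=
    MeromorphicOn.intervalIntegrable_log fun t _ => AnalyticAt.meromorphicAt (by fun_prop)
  exact intervalIntegrable_const.add (intervalIntegrable_log_sin.abs.add log_sin_midpoint.abs)

theorem log_sin_sum_limit_general {a : ℝ} {m : ℕ → ℕ} (hmn : ∀ᶠ n in atTop, m n < n)
    (hlim : Tendsto (fun n : ℕ => m n * (π / n)) atTop (nhds a)) :
    Tendsto (fun n : ℕ => π / n *
        ∑ k ∈ Finset.Icc 1 (m n), Real.log (2 * Real.sin (k * π / n)))
      atTop (nhds (-lob a)) := by
  have step_pos : ∀ᶠ n : ℕ in atTop, 0 < π / n := by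
    filter_upwards [eventually_gt_atTop 0] with n hn
    positivity
  have succ_mul_step_le_pi : ∀ᶠ n : ℕ in atTop, ((m n : ℝ) + 1) * (π / n) ≤ π := by
    filter_upwards [hmn] with n hn
    have : (m n : ℝ) + 1 ≤ n := by exact_mod_cast hn
    have hn' : (0 : ℝ) < n := by exact_mod_cast (m n).zero_le.trans_lt hn
    rw [← mul_div_assoc, div_le_iff₀ hn', mul_comm π]
    gcongr
  have end_le_pi : ∀ᶠ n : ℕ in atTop, m n * (π / n) ≤ π := by
    filter_upwards [step_pos, succ_mul_step_le_pi] with n hn hn'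
    linarith
  have a_le_pi : a ≤ π := le_of_tendsto hlim end_le_pi
  have riemannSum := tendsto_riemannSum_of_dominated
    (g := fun t => Real.log (2 * Real.sin t)) step_pos
    (tendsto_const_nhds.div_atTop tendsto_natCast_atTop_atTop) hlim end_le_pi ?_
    (intervalIntegrable_log_two_mul_sin_majorant 0 π).1 ?_
  · simpa only [lob, neg_neg, Real.log_abs, smul_eq_mul, mul_div_assoc] using riemannSum
  · intro t ht
    have sin_pos : 0 < Real.sin t :=
      Real.sin_pos_of_pos_of_lt_pi ht.1 (ht.2.trans_le a_le_pi)
    exact ContinuousAt.log (by fun_prop) (by positivity)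
  · filter_upwards [step_pos, succ_mul_step_le_pi] with n hh hm t ht
    exact abs_log_two_mul_sin_le ht.1 (le_gridCeil hh) (gridCeil_le_midpoint hh ht hm)
      (by linarith [ht.2])

end LogSin

theorem log_sin_sum_limit (a : ℝ) (ha : 0 < a) (ha' : a < π) (an : ℕ → ℕ)
    (hbound : ∀ n : ℕ, 2 * an n ≤ n - 1)
    (hlim : Tendsto (fun n : ℕ => 2 * π * (an n : ℝ) / n) atTop (nhds a)) :
    Tendsto (fun n : ℕ => π / n *
        ∑ k ∈ Finset.Icc 1 (2 * an n), Real.log (2 * Real.sin (k * π / n)))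
      atTop (nhds (∫ t in (0 : ℝ)..a, Real.log |2 * Real.sin t|)) ∧
    (∫ t in (0 : ℝ)..a, Real.log |2 * Real.sin t|) = -lob a := by
  have integral_eq : (∫ t in (0 : ℝ)..a, Real.log |2 * Real.sin t|) = -lob a := (neg_neg _).symm
  exact ⟨integral_eq ▸ log_sin_sum_limit_general
    ((eventually_gt_atTop 0).mono fun n hn => (hbound n).trans_lt (Nat.sub_one_lt_of_lt hn))
    (hlim.congr fun n => by push_cast; ring), integral_eq⟩

end
end
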